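/- arXiv:1706.01573 — 3 statements merged into one kernel-verified Lean document; each statement's English description precedes it below -/
import Mathlib

section
/- Let N and M be the upper triangular infinite matrices defined by N_{00} = M_{00} = 1, N_{0j} = N_{i0} = M_{0j} = M_{i0} = 0 for i, j ≥ 1, N_{ij} = (-1)^{j-i} \binom{⌊(i-1)/2⌋ + j - i}{⌊(i-1)/2⌋} and M_{ij} = \binom{⌊j/2⌋}{j-i} for 1 ≤ i ≤ j, and N_{ij} = M_{ij} = 0 for i > j ≥ 1. Then for all i, j ∈ ℕ, the (finite) sum ∑_{l=j}^{i} ∑_{k=j}^{l} (-1)^{i+l} M_{li} · \binom{l}{k}(-1)^k · (-1)^{k+j} N_{jk} equals: 1 if i = j and i is even; 1 if i = j+1 and j is even; -1 if i = j and i is odd; and 0 otherwise. That is, (D Mᵀ D)(P D)(D Nᵀ D) is the infinite direct sum of copies of the 2×2 matrix [[1,0],[1,-1]]. -/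
/-- The matrix `N` of Lemma 3.1. -/
noncomputable def Nmat (i j : ℕ) : ℝ :=
  if i = 0 ∧ j = 0 then 1
  else if i = 0 ∨ j = 0 then 0
  else if i ≤ j then (-1) ^ (j - i) * (Nat.choose ((i - 1) / 2 + (j - i)) ((i - 1) / 2) : ℝ)
  else 0

/-- The matrix `M` of Lemma 3.2. -/
noncomputable def Mmat (i j : ℕ) : ℝ :=
  if i = 0 ∧ j = 0 then 1
  else if i = 0 ∨ j = 0 then 0
  else if i ≤ j then (Nat.choose (j / 2) (j - i) : ℝ)
  else 0

/-!
Let `c j = ⌈j / 2⌉`. In terms of generalized binomial coefficients,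
`M l i = choose (i - c i) (i - l)` for `l ≤ i` and `N j k = choose (-c j) (k - j)` for `j ≤ k`,
index `0` included. Since also `(-1) ^ (l - k) * l.choose k = choose (-(k + 1)) (l - k)`, both
matrix multiplications are Chu–Vandermonde convolutions: the first gives
`(D Mᵀ D P) i k = (c i).choose (i - k)`, and multiplying by `D * D Nᵀ D = Nᵀ D` then gives
`(-1) ^ j * (c i - c j).choose (i - j)`, which vanishes for `j + 2 ≤ i` because
`c i - c j < i - j`.
-/

open Finset

section BinomialRing

variable {R : Type*} [CommRing R] [BinomialRing R]

lemma sum_Icc_ringChoose_mul_ringChoose (x y : R) {j i : ℕ} (h : j ≤ i) :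
    ∑ k ∈ Icc j i, Ring.choose x (i - k) * Ring.choose y (k - j) =
      Ring.choose (x + y) (i - j) := by
  rw [add_comm x y, Ring.add_choose_eq _ (Commute.all y x),
    Nat.sum_antidiagonal_eq_sum_range_succ (fun a b ↦ Ring.choose y a * Ring.choose x b),
    ← Ico_add_one_right_eq_Icc, sum_Ico_eq_sum_range, Nat.succ_eq_add_one, Nat.sub_add_comm h]
  refine sum_congr rfl fun s _ ↦ ?_
  rw [Nat.add_sub_cancel_left, Nat.sub_add_eq, mul_comm]

lemma ringChoose_neg (x : R) (n : ℕ) :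
    Ring.choose (-x) n = (-1) ^ n * Ring.choose (x + n - 1) n := by
  rw [Ring.choose_neg, Units.smul_def, Int.coe_negOnePow_natCast, zsmul_eq_mul]
  push_cast
  rfl

lemma neg_one_pow_mul_choose_eq_ringChoose {k l : ℕ} (h : k ≤ l) :
    (-1) ^ l * (l.choose k : R) = (-1) ^ k * Ring.choose (-(k + 1 : R)) (l - k) := by
  obtain ⟨s, rfl⟩ := Nat.exists_eq_add_of_le h
  have top : (k + 1 : R) + s - 1 = ((k + s : ℕ) : R) := by push_cast; ring
  rw [Nat.add_sub_cancel_left, ringChoose_neg, top, Ring.choose_natCast, Nat.choose_symm_add,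
    pow_add, mul_assoc]

lemma sum_Icc_neg_one_pow_mul_ringChoose_mul_choose (x : R) {k i : ℕ} (h : k ≤ i) :
    ∑ l ∈ Icc k i, (-1) ^ l * Ring.choose x (i - l) * (l.choose k : R) =
      (-1) ^ i * Ring.choose (i - x) (i - k) := by
  have top : (k + 1 - x) + ((i - k : ℕ) : R) - 1 = i - x := by rw [Nat.cast_sub h]; ring
  calc
    _ = ∑ l ∈ Icc k i,
          (-1) ^ k * (Ring.choose x (i - l) * Ring.choose (-(k + 1 : R)) (l - k)) :=
      sum_congr rfl fun l hl ↦ by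
        rw [mul_right_comm, neg_one_pow_mul_choose_eq_ringChoose (mem_Icc.mp hl).1]
        ring
    _ = (-1) ^ k * Ring.choose (-(k + 1 - x)) (i - k) := by
      rw [← mul_sum, sum_Icc_ringChoose_mul_ringChoose x _ h, neg_sub, sub_eq_add_neg]
    _ = (-1) ^ i * Ring.choose (i - x) (i - k) := by
      rw [ringChoose_neg, top, ← mul_assoc, ← pow_add, Nat.add_sub_cancel' h]

end BinomialRing

lemma Mmat_of_le {l i : ℕ} (h : l ≤ i) : Mmat l i = ((i / 2).choose (i - l) : ℝ) := by
  rcases Nat.eq_zero_or_pos l with rfl | hl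
  · rcases Nat.eq_zero_or_pos i with rfl | hi
    · simp [Mmat]
    · simp [Mmat, hi.ne', Nat.choose_eq_zero_of_lt (Nat.div_lt_self hi one_lt_two)]
  · simp [Mmat, h, hl.ne', (hl.trans_le h).ne']

lemma Nmat_of_le {j k : ℕ} (h : j ≤ k) :
    Nmat j k = Ring.choose (-((j + 1) / 2 : ℕ) : ℝ) (k - j) := by
  rcases Nat.eq_zero_or_pos j with rfl | hj
  · simp [Nmat, Ring.choose_zero_ite]
  · have half : (j + 1) / 2 = (j - 1) / 2 + 1 := by omega
    have top (s : ℕ) : (((j - 1) / 2 + 1 : ℕ) : ℝ) + s - 1 = ((j - 1) / 2 + s : ℕ) := by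
      push_cast
      ring
    rw [half, ringChoose_neg, top, Ring.choose_natCast, ← Nat.choose_symm_add]
    simp [Nmat, h, hj.ne', (hj.trans_le h).ne']

lemma sum_Icc_Mmat_mul_choose {k i : ℕ} (h : k ≤ i) :
    ∑ l ∈ Icc k i, (-1) ^ (i + l) * Mmat l i * (l.choose k : ℝ) =
      (((i + 1) / 2).choose (i - k) : ℝ) := by
  have top : (i : ℝ) - (i / 2 : ℕ) = ((i + 1) / 2 : ℕ) := by
    rw [← Nat.cast_sub (Nat.div_le_self i 2)]
    congr 1
    omega
  calc
    _ = (-1) ^ i *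
          ∑ l ∈ Icc k i, (-1) ^ l * Ring.choose ((i / 2 : ℕ) : ℝ) (i - l) * (l.choose k : ℝ) := by
      rw [mul_sum]
      refine sum_congr rfl fun l hl ↦ ?_
      rw [Mmat_of_le (mem_Icc.mp hl).2, Ring.choose_natCast]
      ring
    _ = (((i + 1) / 2).choose (i - k) : ℝ) := by
      rw [sum_Icc_neg_one_pow_mul_ringChoose_mul_choose _ h, top, Ring.choose_natCast,
        ← mul_assoc, pow_mul_pow_eq_one _ (by norm_num), one_mul]

lemma sum_Icc_choose_mul_Nmat {j i : ℕ} (h : j ≤ i) :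
    ∑ k ∈ Icc j i, (((i + 1) / 2).choose (i - k) : ℝ) * Nmat j k =
      (((i + 1) / 2 - (j + 1) / 2).choose (i - j) : ℝ) := by
  have half_le : (j + 1) / 2 ≤ (i + 1) / 2 := by gcongr
  rw [← Ring.choose_natCast, Nat.cast_sub half_le, sub_eq_add_neg,
    ← sum_Icc_ringChoose_mul_ringChoose _ _ h]
  refine sum_congr rfl fun k hk ↦ ?_
  rw [Nmat_of_le (mem_Icc.mp hk).1, Ring.choose_natCast]

lemma sum_Mmat_mul_choose_mul_Nmat {i j : ℕ} (h : j ≤ i) :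
    (∑ l ∈ Icc j i, ∑ k ∈ Icc j l,
        (-1 : ℝ) ^ (i + l) * Mmat l i * ((Nat.choose l k : ℝ) * (-1) ^ k) *
          ((-1 : ℝ) ^ (k + j) * Nmat j k)) =
      (-1) ^ j * (((i + 1) / 2 - (j + 1) / 2).choose (i - j) : ℝ) := by
  have sign (k : ℕ) : (-1 : ℝ) ^ k * (-1) ^ (k + j) = (-1) ^ j := by
    rw [pow_add, ← mul_assoc, pow_mul_pow_eq_one _ (by norm_num), one_mul]
  calc
    _ = ∑ k ∈ Icc j i, ∑ l ∈ Icc k i,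
          (-1 : ℝ) ^ (i + l) * Mmat l i * ((Nat.choose l k : ℝ) * (-1) ^ k) *
            ((-1 : ℝ) ^ (k + j) * Nmat j k) :=
      sum_comm' fun l k ↦ by simp only [mem_Icc]; omega
    _ = ∑ k ∈ Icc j i, (-1) ^ j *
          ((∑ l ∈ Icc k i, (-1) ^ (i + l) * Mmat l i * (l.choose k : ℝ)) * Nmat j k) := by
      refine sum_congr rfl fun k _ ↦ ?_
      rw [sum_mul, mul_sum]
      refine sum_congr rfl fun l _ ↦ ?_
      rw [← sign k]
      ring
    _ = (-1) ^ j * ∑ k ∈ Icc j i, (((i + 1) / 2).choose (i - k) : ℝ) * Nmat j k := by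
      rw [mul_sum]
      exact sum_congr rfl fun k hk ↦ by rw [sum_Icc_Mmat_mul_choose (mem_Icc.mp hk).2]
    _ = _ := by rw [sum_Icc_choose_mul_Nmat h]

/-- `(D Mᵀ D)(P D)(D Nᵀ D)` is the infinite direct sum of copies of
`[[1,0],[1,-1]]`. -/
theorem stmt5 (i j : ℕ) :
    (∑ l ∈ Finset.Icc j i, ∑ k ∈ Finset.Icc j l,
        (-1 : ℝ) ^ (i + l) * Mmat l i * ((Nat.choose l k : ℝ) * (-1) ^ k) *
          ((-1 : ℝ) ^ (k + j) * Nmat j k))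
      = if i = j then (if Even i then 1 else -1)
        else if i = j + 1 ∧ Even j then 1 else 0 := by
  rcases lt_or_ge i j with hij | hij
  · rw [Icc_eq_empty_of_lt hij, sum_empty, if_neg hij.ne, if_neg (by omega)]
  rw [sum_Mmat_mul_choose_mul_Nmat hij]
  obtain rfl | rfl | far : i = j ∨ i = j + 1 ∨ j + 2 ≤ i := by omega
  · simp [neg_one_pow_eq_ite]
  · have ceil_half_step : (j + 1 + 1) / 2 - (j + 1) / 2 = if Even j then 1 else 0 := by
      split_ifs <;> grind
    rw [ceil_half_step, Nat.add_sub_cancel_left, Nat.choose_one_right]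
    by_cases hj : Even j <;> simp [hj]
  · have top_lt : (i + 1) / 2 - (j + 1) / 2 < i - j := by omega
    rw [Nat.choose_eq_zero_of_lt top_lt, if_neg (by omega), if_neg (by omega)]
    simp
end

section
/- Let x : ℕ → ℝ. Define Q : ℕ × ℕ → ℝ by Q_{00} = 2, Q_{i0} = 1 for i ≥ 1, Q_{0j} = 0 for j ≥ 1, and Q_{ij} = \binom{i}{j} + \binom{i-1}{j-1} for i, j ≥ 1. Then ∑_{k=0}^{n} \binom{n}{k}(-1)^k x_k = x_n holds for every n if and only if there exists a sequence c : ℕ → ℝ such that for every n, x_n = ∑_{j=0}^{⌊n/2⌋} c_j Q_{n-j, j} (a finite sum). In other words, the invariant sequences of the first kind are exactly the (entrywise well-defined) linear combinations of the columns of Q↓, whose j-th column has entries Q_{n-j,j}. -/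
/-- The matrix `Q = P + [1, 0ᵀ; 0, P]`. -/
noncomputable def Qmat (i j : ℕ) : ℝ :=
  if j = 0 then (if i = 0 then 2 else 1)
  else if i = 0 then 0
  else (Nat.choose i j : ℝ) + (Nat.choose (i - 1) (j - 1) : ℝ)

/-!
Let `T` be the transform `x ↦ (∑ₖ (n choose k) (-1)ᵏ xₖ)ₙ` and `E` the left shift. Pascal's
rule says `E T = T (1 - E)`, so `T` commutes with `D = E (E - 1)`. By the Pascal-type recursion
of `Q`, the operator `D` kills the first column of `Q↓` and sends every other column to its
predecessor, so it acts on combinations of the columns by shifting the coefficients. A sequence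
`x` is recovered from `x₀`, `x₁` and `D x`, and an invariant one has `x₀ = 2 x₁`. Hence
induction along `D` gives both directions; an invariant `x` has coefficients `cⱼ = (Dʲ x)₁`.
-/

open Finset Function

section LucasTriangle

/-- The matrix `Q` with natural number entries, given by its Pascal-type recursion so that it can
act on any abelian group. Its antidiagonals sum to the Lucas numbers. -/
def lucasTriangle : ℕ → ℕ → ℕ
  | 0, 0 => 2
  | 0, _ + 1 => 0
  | _ + 1, 0 => 1
  | i + 1, j + 1 => lucasTriangle i j + lucasTriangle i (j + 1)

lemma lucasTriangle_succ_succ_eq_choose_add_choose (i j : ℕ) :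
    lucasTriangle (i + 1) (j + 1) = (i + 1).choose (j + 1) + i.choose j := by
  induction i generalizing j with
  | zero => cases j <;> simp [lucasTriangle, Nat.choose_succ_succ]
  | succ i ih =>
    rw [lucasTriangle, ih]
    cases j with
    | zero => simp +arith [lucasTriangle]
    | succ j =>
      rw [ih, Nat.choose_succ_succ (i + 1) (j + 1), Nat.choose_succ_succ i j]
      ring

lemma lucasTriangle_eq_zero_of_lt {i j : ℕ} (h : i < j) : lucasTriangle i j = 0 := by
  obtain ⟨j, rfl⟩ := Nat.exists_eq_succ_of_ne_zero (Nat.ne_zero_of_lt h)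
  cases i with
  | zero => rfl
  | succ i =>
    rw [lucasTriangle_succ_succ_eq_choose_add_choose, Nat.choose_eq_zero_of_lt h,
      Nat.choose_eq_zero_of_lt (Nat.lt_of_succ_lt_succ h)]

lemma Qmat_eq_lucasTriangle (i j : ℕ) : Qmat i j = lucasTriangle i j := by
  rcases i with _ | i <;> rcases j with _ | j
  case succ.succ => simp [Qmat, lucasTriangle_succ_succ_eq_choose_add_choose]
  all_goals simp [Qmat, lucasTriangle]

end LucasTriangle

section BinomialTransform

variable {M : Type*} [AddCommGroup M]

/-- The binomial transform of a sequence; its fixed points are the invariant sequences of the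
first kind. -/
def binomialTransform (x : ℕ → M) (n : ℕ) : M :=
  ∑ k ∈ range (n + 1), n.choose k • (-1 : ℤ) ^ k • x k

/-- The operator `D = E (E - 1)` on sequences, where `E` is the left shift. It peels off the columns
of `Q↓` one at a time. -/
def shiftedDiff (x : ℕ → M) (n : ℕ) : M :=
  x (n + 2) - x (n + 1)

lemma binomialTransform_zero (x : ℕ → M) : binomialTransform x 0 = x 0 := by
  simp [binomialTransform]

lemma binomialTransform_one (x : ℕ → M) : binomialTransform x 1 = x 0 - x 1 := by
  simp [binomialTransform, sum_range_succ, sub_eq_add_neg]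

lemma binomialTransform_sub (x y : ℕ → M) :
    binomialTransform (x - y) = binomialTransform x - binomialTransform y := by
  ext n
  simp [binomialTransform, smul_sub, sum_sub_distrib]

lemma binomialTransform_succ (x : ℕ → M) (n : ℕ) :
    binomialTransform x (n + 1) =
      binomialTransform x n - binomialTransform (fun k => x (k + 1)) n := by
  simp only [binomialTransform]
  rw [sum_choose_succ_nsmul (fun k _ => (-1 : ℤ) ^ k • x k) n]
  simp [pow_succ, sub_eq_add_neg]

lemma commute_shiftedDiff_binomialTransform :
    Function.Commute (shiftedDiff (M := M)) binomialTransform := by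
  intro x
  ext n
  calc binomialTransform x (n + 2) - binomialTransform x (n + 1)
      = binomialTransform (fun k => x (k + 2)) n - binomialTransform (fun k => x (k + 1)) n := by
        rw [binomialTransform_succ x (n + 1), binomialTransform_succ (fun k => x (k + 1)) n]
        abel
    _ = binomialTransform (shiftedDiff x) n :=
        (congrFun (binomialTransform_sub _ _) n).symm

lemma eq_two_nsmul_of_isFixedPt_binomialTransform {x : ℕ → M}
    (hx : IsFixedPt binomialTransform x) : x 0 = 2 • x 1 := by
  have h : x 0 - x 1 = x 1 := by rw [← binomialTransform_one, hx]
  rw [two_nsmul, ← sub_eq_iff_eq_add, h]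

end BinomialTransform

section DiagonalSum

variable {M : Type*} [AddCommGroup M]

/-- The combination of the columns of `Q↓` with coefficients `c`. The sum runs over a whole
antidiagonal of `Q`, whose entries with `j > ⌊n/2⌋` vanish. -/
def diagonalSum (c : ℕ → M) (n : ℕ) : M :=
  ∑ p ∈ antidiagonal n, lucasTriangle p.1 p.2 • c p.2

lemma diagonalSum_eq_sum_range (c : ℕ → M) (n : ℕ) :
    diagonalSum c n = ∑ j ∈ range (n / 2 + 1), lucasTriangle (n - j) j • c j := by
  rw [diagonalSum, ← Nat.sum_antidiagonal_swap, Nat.sum_antidiagonal_eq_sum_range_succ_mk]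
  refine (sum_subset (range_mono (by lia)) fun j _ hj => ?_).symm
  rw [mem_range] at hj
  have hzero : lucasTriangle (n - j) j = 0 := lucasTriangle_eq_zero_of_lt (by lia)
  simp [hzero]

lemma diagonalSum_zero (c : ℕ → M) : diagonalSum c 0 = 2 • c 0 := by
  simp [diagonalSum, lucasTriangle]

lemma diagonalSum_one (c : ℕ → M) : diagonalSum c 1 = c 0 := by
  simp [diagonalSum, Nat.antidiagonal_succ, lucasTriangle]

lemma shiftedDiff_diagonalSum (c : ℕ → M) :
    shiftedDiff (diagonalSum c) = diagonalSum fun j => c (j + 1) := by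
  ext n
  simp only [shiftedDiff, diagonalSum]
  rw [Nat.antidiagonal_succ_succ', Nat.sum_antidiagonal_succ']
  simp [lucasTriangle, add_smul, sum_add_distrib]

lemma isFixedPt_binomialTransform_diagonalSum (c : ℕ → M) :
    IsFixedPt binomialTransform (diagonalSum c) := by
  ext n
  induction n using Nat.twoStepInduction generalizing c with
  | zero => exact binomialTransform_zero _
  | one => simp [binomialTransform_one, diagonalSum_zero, diagonalSum_one, two_nsmul]
  | more n ih ih' =>
    have h : shiftedDiff (binomialTransform (diagonalSum c)) n = shiftedDiff (diagonalSum c) n := by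
      rw [commute_shiftedDiff_binomialTransform, shiftedDiff_diagonalSum, ih]
    rwa [shiftedDiff, shiftedDiff, ih', sub_left_inj] at h

lemma eq_diagonalSum_of_isFixedPt_binomialTransform {x : ℕ → M}
    (hx : IsFixedPt binomialTransform x) : x = diagonalSum fun j => shiftedDiff^[j] x 1 := by
  ext n
  induction n using Nat.twoStepInduction generalizing x with
  | zero =>
    rw [diagonalSum_zero, iterate_zero_apply, eq_two_nsmul_of_isFixedPt_binomialTransform hx]
  | one => rw [diagonalSum_one, iterate_zero_apply]
  | more n ih ih' =>
    set c : ℕ → M := fun j => shiftedDiff^[j] x 1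
    have h : shiftedDiff x n = shiftedDiff (diagonalSum c) n := by
      rw [shiftedDiff_diagonalSum]
      exact ih (hx.map commute_shiftedDiff_binomialTransform)
    rwa [shiftedDiff, shiftedDiff, ih' hx, sub_left_inj] at h

end DiagonalSum

theorem stmt9_general {M : Type*} [AddCommGroup M] (x : ℕ → M) :
    (∀ n, ∑ k ∈ range (n + 1), n.choose k • (-1 : ℤ) ^ k • x k = x n) ↔
    ∃ c : ℕ → M, ∀ n, x n = ∑ j ∈ range (n / 2 + 1), lucasTriangle (n - j) j • c j := by
  simp only [← diagonalSum_eq_sum_range, ← funext_iff]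
  constructor
  · exact fun hx => ⟨_, eq_diagonalSum_of_isFixedPt_binomialTransform hx⟩
  · rintro ⟨c, rfl⟩
    exact isFixedPt_binomialTransform_diagonalSum c

/-- the invariant sequences of the first kind are exactly the linear
combinations of the columns of `Q↓`, whose `j`-th column has entries `Q (n-j) j`;
the sum runs over `0 ≤ j ≤ ⌊n/2⌋`. -/
theorem stmt9 (x : ℕ → ℝ) :
    (∀ n, ∑ k ∈ Finset.range (n + 1), (Nat.choose n k : ℝ) * (-1) ^ k * x k = x n) ↔
    (∃ c : ℕ → ℝ, ∀ n, x n =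
      ∑ j ∈ Finset.range (n / 2 + 1), c j * Qmat (n - j) j) := by
  simpa [Qmat_eq_lucasTriangle, mul_assoc, mul_comm (lucasTriangle _ _ : ℝ)] using stmt9_general x
end

section
/- Let x : ℕ → ℝ be a finitely supported sequence such that ∑_{k=n}^∞ \binom{k}{n}(-1)^k x_k = -x_n for every n (the sums are finite by finite support). Define y : ℕ → ℝ by y_n = ∑_{t=0}^∞ (-1)^t (1/2)^{t+1} x_{n+1+t} (a finite sum). Then y is finitely supported and ∑_{k=n}^∞ \binom{k}{n}(-1)^k y_k = y_n for every n. -/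
/-!
Encode a finitely supported sequence as the coefficients of a polynomial `p`. The transform
`a ↦ (n ↦ ∑ k, (k choose n) (-1)^k a k)` is then the substitution `X ↦ -1 - X`, the reflection
about `-1/2`, and `J(2)⁻¹ J(0)` sends `p` to the quotient of `p / 2` by `X + 1/2`, remainder
discarded. If `p` is odd under the reflection, it vanishes at the fixed point `-1/2`, so this
division is exact; as `X + 1/2` is odd too, the quotient is even.
-/

open Polynomial

section Coefficients

theorem exists_polynomial_coeff_eq {R : Type*} [Semiring R] {x : ℕ → R}
    (hx : (Function.support x).Finite) : ∃ p : R[X], p.coeff = x :=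
  ⟨⟨.ofCoeff (.ofSupportFinite x hx)⟩, rfl⟩

theorem finite_support_coeff {R : Type*} [Semiring R] (p : R[X]) :
    (Function.support p.coeff).Finite :=
  p.toFinsupp.coeff.hasFiniteSupport

variable {R : Type*} [CommRing R]

theorem coeff_comp_neg_one_sub_X (p : R[X]) (n : ℕ) :
    (p.comp (-1 - X)).coeff n = ∑ᶠ k, (Nat.choose k n : R) * (-1) ^ k * p.coeff k := by
  have coeff_pow (k : ℕ) : ((-1 - X : R[X]) ^ k).coeff n = (-1) ^ k * (Nat.choose k n : R) := by
    have hfactor : (-1 - X : R[X]) ^ k = C ((-1) ^ k) * (1 + X) ^ k := by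
      rw [← neg_add', neg_pow, C_pow, C_neg, C_1]
    rw [hfactor, coeff_C_mul, coeff_one_add_X_pow]
  have hsupp : (Function.support fun k => (Nat.choose k n : R) * (-1) ^ k * p.coeff k) ⊆
      p.support := fun k hk => mem_support_iff.mpr (right_ne_zero_of_mul hk)
  rw [finsum_eq_sum_of_support_subset _ hsupp, comp_eq_sum_left, sum_def, finsetSum_coeff]
  refine Finset.sum_congr rfl fun k _ => ?_
  rw [coeff_C_mul, coeff_pow]
  ring

theorem comp_neg_one_sub_X_eq_iff {p q : R[X]} :
    p.comp (-1 - X) = q ↔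
      ∀ n, ∑ᶠ k, (Nat.choose k n : R) * (-1) ^ k * p.coeff k = q.coeff n := by
  simp only [Polynomial.ext_iff, coeff_comp_neg_one_sub_X]

theorem coeff_divByMonic_X_sub_C_eq_finsum (p : R[X]) (a : R) (n : ℕ) :
    (p /ₘ (X - C a)).coeff n = ∑ᶠ t, a ^ t * p.coeff (n + 1 + t) := by
  have hsupp : (Function.support fun t => a ^ t * p.coeff (n + 1 + t)) ⊆
      Finset.range (p.natDegree + 1 - (n + 1)) := fun t ht => by
    have := le_natDegree_of_ne_zero (right_ne_zero_of_mul ht)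
    simp only [Finset.coe_range, Set.mem_Iio]
    omega
  rw [finsum_eq_sum_of_support_subset _ hsupp, coeff_divByMonic_X_sub_C,
    ← Finset.Ico_succ_right_eq_Icc, Finset.sum_Ico_eq_sum_range]
  simp

end Coefficients

section Reflection

variable {R : Type*} [CommRing R] {p : R[X]} {a : R}

theorem isRoot_of_comp_reflection_eq_neg (h2 : IsLeftRegular (2 : R))
    (hp : p.comp (C (2 * a) - X) = -p) : p.IsRoot a := by
  have heval : p.eval a = -p.eval a := by
    simpa [eval_comp, two_mul] using congrArg (eval a) hp
  rw [IsRoot.def, ← h2.mul_left_eq_zero_iff, two_mul]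
  exact eq_neg_iff_add_eq_zero.mp heval

theorem divByMonic_X_sub_C_comp_reflection (hp : p.comp (C (2 * a) - X) = -p) (ha : p.IsRoot a) :
    (p /ₘ (X - C a)).comp (C (2 * a) - X) = p /ₘ (X - C a) := by
  have hfactor : (X - C a) * (p /ₘ (X - C a)) = p := mul_divByMonic_eq_iff_isRoot.mpr ha
  have hodd : (X - C a).comp (C (2 * a) - X) = -(X - C a) := by
    simp only [sub_comp, X_comp, C_comp, two_mul, C_add]
    ring
  refine (monic_X_sub_C a).isRegular.left (neg_injective ?_)
  calc -((X - C a) * (p /ₘ (X - C a)).comp (C (2 * a) - X))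
      = ((X - C a) * (p /ₘ (X - C a))).comp (C (2 * a) - X) := by rw [mul_comp, hodd, neg_mul]
    _ = -((X - C a) * (p /ₘ (X - C a))) := by rw [hfactor, hp]

end Reflection

theorem stmt11_general {R : Type*} [CommRing R] [Invertible (2 : R)] (x : ℕ → R)
    (hx : (Function.support x).Finite)
    (hinv : ∀ n, ∑ᶠ k, (Nat.choose k n : R) * (-1) ^ k * x k = -x n)
    (y : ℕ → R)
    (hy : ∀ n, y n = ∑ᶠ t, (-1 : R) ^ t * ⅟2 ^ (t + 1) * x (n + 1 + t)) :
    (Function.support y).Finite ∧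
    (∀ n, ∑ᶠ k, (Nat.choose k n : R) * (-1) ^ k * y k = y n) := by
  obtain ⟨p, rfl⟩ := exists_polynomial_coeff_eq hx
  set q : R[X] := C ⅟2 * p with hq
  have hreflection : (C (2 * -⅟2) - X : R[X]) = -1 - X := by simp
  have hodd : q.comp (C (2 * -⅟2) - X) = -q := by
    have hp : p.comp (-1 - X) = -p :=
      comp_neg_one_sub_X_eq_iff.mpr (by simpa only [coeff_neg] using hinv)
    rw [hreflection, hq, mul_comp, C_comp, hp, mul_neg]
  have hroot : q.IsRoot (-⅟2) :=
    isRoot_of_comp_reflection_eq_neg (isUnit_of_invertible 2).isRegular.left hodd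
  obtain rfl : y = (q /ₘ (X - C (-⅟2))).coeff := by
    ext n
    rw [hy, coeff_divByMonic_X_sub_C_eq_finsum]
    refine finsum_congr fun t => ?_
    rw [hq, coeff_C_mul, neg_pow (⅟2 : R)]
    ring
  refine ⟨finite_support_coeff _, comp_neg_one_sub_X_eq_iff.mp ?_⟩
  rw [← hreflection, divByMonic_X_sub_C_comp_reflection hodd hroot]

/-- if `x` is a finitely supported inverse invariant sequence of the
second kind, then `y = J(2)⁻¹ J(0) x`, i.e. `y n = ∑ t, (-1)^t (1/2)^(t+1) x (n+1+t)`
(a finite sum), is finitely supported and is an invariant sequence of the second kind. -/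
theorem stmt11 (x : ℕ → ℝ) (hx : (Function.support x).Finite)
    (hinv : ∀ n, ∑ᶠ k, (Nat.choose k n : ℝ) * (-1) ^ k * x k = -x n)
    (y : ℕ → ℝ)
    (hy : ∀ n, y n = ∑ᶠ t, (-1 : ℝ) ^ t * (1 / 2) ^ (t + 1) * x (n + 1 + t)) :
    (Function.support y).Finite ∧
    (∀ n, ∑ᶠ k, (Nat.choose k n : ℝ) * (-1) ^ k * y k = y n) := by
  exact stmt11_general x hx hinv y (by simpa only [one_div, invOf_eq_inv] using hy)
end
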